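/- arXiv:1803.08029 — 2 statements merged into one kernel-verified Lean document; each statement's English description precedes it below -/
import Mathlib

section
/- Let ℓ ≥ 3 and s ≥ 0 be integers. Then the quantum dimension of L_{sl_ℓ}(−(s+1)Λ_0 + sΛ_1) equals 1; that is, lim_{t→0⁺} ch_s(it)/ch_0(it) = 1, where for τ = it (so q = e^{−2πt}) one sets ch_s(it) := e^{−2πt(h_s + (ℓ+1)/24)} F_{ℓ,s}(e^{−2πt})/(e^{−2πt};e^{−2πt})_∞^{ℓ²−1}. -/
open Complex Real Filter Topology

/-- The q-Pochhammer symbol `(a;q)_∞ = ∏_{j=0}^∞ (1 - a q^j)`. -/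
noncomputable def qPoch (a q : ℂ) : ℂ := ∏' j : ℕ, (1 - a * q ^ j)

/-- `F_{ℓ,s}(q)` as the renormalized `s`-th Fourier coefficient, contour at height `y`. -/
noncomputable def Fls (ℓ s : ℕ) (q : ℂ) (y : ℝ) : ℂ :=
  qPoch q q ^ (ℓ ^ 2 - 1) *
    ∫ x in (0:ℝ)..1,
      qPoch q q /
          (qPoch (Complex.exp (2 * ↑π * I * (↑x + ↑y * I))) q ^ ℓ *
            qPoch (Complex.exp (-(2 * ↑π * I * (↑x + ↑y * I))) * q) q ^ ℓ) *
        Complex.exp (-(2 * ↑π * I * (s : ℂ) * (↑x + ↑y * I)))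

/-- The lowest conformal weight `h_s = s²/(2ℓ) + s/2`. -/
noncomputable def hConf (ℓ s : ℕ) : ℝ := (s : ℝ) ^ 2 / (2 * ℓ) + (s : ℝ) / 2

/-- `ch_s(e^{-T}) = e^{-T(h_s + (ℓ+1)/24)} F_{ℓ,s}(e^{-T}) / (e^{-T};e^{-T})_∞^{ℓ²-1}`. -/
noncomputable def chF (ℓ s : ℕ) (T y : ℝ) : ℂ :=
  Complex.exp (-(T : ℂ) * ((hConf ℓ s : ℝ) + ((ℓ : ℝ) + 1) / 24)) *
    Fls ℓ s (Complex.exp (-(T : ℂ))) y /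
      qPoch (Complex.exp (-(T : ℂ))) (Complex.exp (-(T : ℂ))) ^ (ℓ ^ 2 - 1)

/-!
The integrand of `Fls` is holomorphic and `1`-periodic on the strip `0 < Im z < t`, so by Cauchy's
theorem the contour may be moved to the symmetric height `Im z = t / 2`
(`integral_integrand_eq`). There `ζ = e^{2πiz}` and `q / ζ` are complex conjugates, so the two
products combine to `‖(ζ;q)_∞‖²`, and the integrand is a constant times a positive weight
`wt ℓ t x` times the phase `e^{-2πisx}` (`integrand_mid`). The factors `(q;q)_∞` cancel in the
quotient of characters and the exponential prefactors tend to `1`, so it remains to see that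
`∫ wt · e^{-2πisx} / ∫ wt → 1` as `t → 0⁺` (`tendsto_conc`).

No modular transformation is needed for this. Writing `r_j = e^{-2πt(j+1/2)}`, one has
`‖(ζ;q)_∞‖² = ∏_j ((1 - r_j)² + 4 r_j sin²(πx))`, and every factor increases with `sin²(πx)`. If
`sin²(πx) ≥ A` and `sin²(πx') ≤ A / 2`, then for each fixed `j` the quotient of the factor at `x'` by
the factor at `x` is at most `3/4` once `t` is small, because `r_j → 1`. Hence the whole quotient is
eventually at most `(3/4)^N` for every `N` (`eventually_mid_le`), and the weight concentrates where
`sin(πx)` is small. Since `|e^{-2πisx} - 1| ≤ 2s |sin(πx)|`, the phase is close to `1` there.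
-/

/-! ### The q-Pochhammer symbol as a function of its first argument -/

/-- The coordinate `ζ = e^{2πiz}`. -/
noncomputable def zet (z : ℂ) : ℂ := Complex.exp (2 * ↑π * I * z)

lemma norm_zet (z : ℂ) : ‖zet z‖ = Real.exp (-(2 * π * z.im)) := by
  simp [zet, Complex.norm_exp]

lemma norm_nome (t : ℝ) : ‖Complex.exp (-((2 * π * t : ℝ) : ℂ))‖ = Real.exp (-(2 * π * t)) := by
  rw [Complex.norm_exp]; simp

lemma norm_nome_lt {t : ℝ} (ht : 0 < t) : ‖Complex.exp (-((2 * π * t : ℝ) : ℂ))‖ < 1 := by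
  rw [norm_nome]; simp; positivity

lemma summable_qPoch (a : ℂ) {q : ℂ} (hq : ‖q‖ < 1) : Summable fun j : ℕ => ‖-(a * q ^ j)‖ := by
  simpa using (summable_geometric_of_lt_one (norm_nonneg _) hq).mul_left ‖a‖

lemma multipliable_qPoch (a : ℂ) {q : ℂ} (hq : ‖q‖ < 1) :
    Multipliable fun j : ℕ => 1 - a * q ^ j := by
  simpa [sub_eq_add_neg] using multipliable_one_add_of_summable (summable_qPoch a hq)

lemma qPoch_ne_zero {a q : ℂ} (ha : ‖a‖ < 1) (hq : ‖q‖ < 1) : qPoch a q ≠ 0 := by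
  have := tprod_one_add_ne_zero_of_summable (f := fun j : ℕ => -(a * q ^ j)) (fun j h => ?_)
    (summable_qPoch a hq)
  · simpa [qPoch, sub_eq_add_neg] using this
  · have h1 : a * q ^ j = 1 := by linear_combination -h
    have h2 : ‖a‖ * ‖q‖ ^ j = 1 := by simpa using congrArg norm h1
    have h3 : ‖q‖ ^ j ≤ 1 := pow_le_one₀ (norm_nonneg _) hq.le
    nlinarith [norm_nonneg a]

lemma differentiable_qPoch {q : ℂ} (hq : ‖q‖ < 1) : Differentiable ℂ fun a => qPoch a q := by
  have hloc : HasProdLocallyUniformlyOn (fun (j : ℕ) (a : ℂ) => 1 + -(a * q ^ j))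
      (fun a => ∏' j : ℕ, (1 + -(a * q ^ j))) Set.univ := by
    apply hasProdLocallyUniformlyOn_of_forall_compact isOpen_univ
    intro K _ hK
    obtain ⟨C, hC⟩ := hK.isBounded.exists_norm_le
    refine ((summable_geometric_of_lt_one (norm_nonneg _) hq).mul_left
      C).hasProdUniformlyOn_nat_one_add hK (.of_forall fun n x hx => ?_) (fun _ => by fun_prop)
    rw [norm_neg, norm_mul, norm_pow]
    gcongr
    exact hC x hx
  have := hloc.differentiableOn (.of_forall fun _ => by
    simpa [Finset.prod_fn] using DifferentiableOn.finsetProd (fun _ _ => by fun_prop)) isOpen_univ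
  simpa [qPoch, sub_eq_add_neg, differentiableOn_univ] using this

/-! ### Size of the product on the symmetric contour -/

lemma normSq_one_sub (r x : ℝ) :
    ‖1 - (r : ℂ) * Complex.exp (2 * ↑π * I * x)‖ ^ 2 = (1 - r) ^ 2 + 4 * r * Real.sin (π * x) ^ 2 := by
  have h : (2 * ↑π * I * x : ℂ) = ((2 * (π * x) : ℝ) : ℂ) * I := by push_cast; ring
  have key : ∀ c d : ℝ, ‖1 - (r : ℂ) * (c + d * I)‖ ^ 2 = (1 - r * c) ^ 2 + (r * d) ^ 2 := by
    intro c d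
    rw [← Complex.normSq_eq_norm_sq, Complex.normSq_apply]
    simp
    ring
  rw [h, Complex.exp_mul_I, ← Complex.ofReal_cos, ← Complex.ofReal_sin, key,
    Real.cos_two_mul, Real.sin_two_mul]
  have := Real.sin_sq_add_cos_sq (π * x)
  set S := Real.sin (π * x)
  set C := Real.cos (π * x)
  have hS : S ^ 2 = 1 - C ^ 2 := by linarith
  ring_nf
  rw [hS]; ring

/-- The product `(ζ;q)_∞` on the symmetric contour: `ζ = e^{2πi(x + it/2)}` and `q = e^{-2πt}`. -/
noncomputable def mid (t x : ℝ) : ℂ :=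
  qPoch (zet (x + (t / 2 : ℝ) * I)) (Complex.exp (-((2 * π * t : ℝ) : ℂ)))

lemma zet_mul_pow (t x : ℝ) (j : ℕ) :
    zet (x + (t / 2 : ℝ) * I) * Complex.exp (-((2 * π * t : ℝ) : ℂ)) ^ j =
      (Real.exp (-(2 * π * t * (j + 1 / 2))) : ℂ) * Complex.exp (2 * ↑π * I * x) := by
  rw [zet, ← Complex.exp_nat_mul, Complex.ofReal_exp, ← Complex.exp_add, ← Complex.exp_add]
  congr 1
  push_cast
  linear_combination (π * t) * I_sq

lemma tendsto_mid_sq {t : ℝ} (ht : 0 < t) (x : ℝ) :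
    Tendsto (fun n => ∏ j ∈ Finset.range n,
      ((1 - Real.exp (-(2 * π * t * (j + 1 / 2)))) ^ 2 +
        4 * Real.exp (-(2 * π * t * (j + 1 / 2))) * Real.sin (π * x) ^ 2))
      atTop (𝓝 (‖mid t x‖ ^ 2)) := by
  have h := ((multipliable_qPoch (zet (x + (t / 2 : ℝ) * I))
    (norm_nome_lt ht)).hasProd.tendsto_prod_nat.norm.pow 2)
  refine h.congr fun n => ?_
  rw [norm_prod, ← Finset.prod_pow]
  refine Finset.prod_congr rfl fun j _ => ?_
  rw [zet_mul_pow, ← normSq_one_sub]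

/-- Concentration estimate: as `t → 0⁺`, the product is uniformly negligible where `sin²(πx')` is at
most `A / 2`, compared with its size where `sin²(πx)` is at least `A`. -/
lemma eventually_mid_le {A κ : ℝ} (hA : 0 < A) (hκ : 0 < κ) :
    ∀ᶠ t in 𝓝[>] (0 : ℝ), ∀ x x' : ℝ, A ≤ Real.sin (π * x) ^ 2 →
      Real.sin (π * x') ^ 2 ≤ A / 2 → ‖mid t x'‖ ^ 2 ≤ κ * ‖mid t x‖ ^ 2 := by
  -- The first `N` factors each gain `3/4`; the remaining ones are only compared monotonically.
  obtain ⟨N, hN⟩ := exists_pow_lt_of_lt_one hκ (by norm_num : (3 / 4 : ℝ) < 1)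
  -- This inequality is equivalent to `(1 - r)² + 2rA ≤ (3/4) ((1 - r)² + 4rA)`.
  have hev : ∀ᶠ t in 𝓝[>] (0 : ℝ), ∀ j ∈ Finset.range N,
      (1 - Real.exp (-(2 * π * t * (j + 1 / 2)))) ^ 2 ≤
        4 * Real.exp (-(2 * π * t * (j + 1 / 2))) * A := by
    rw [Filter.eventually_all_finset]
    intro j _
    apply Filter.Eventually.filter_mono nhdsWithin_le_nhds
    have hc : Continuous fun t : ℝ => 4 * Real.exp (-(2 * π * t * (j + 1 / 2))) * A -
        (1 - Real.exp (-(2 * π * t * (j + 1 / 2)))) ^ 2 := by fun_prop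
    have := (hc.tendsto 0).eventually_const_lt (u := 0) (by simpa using hA)
    filter_upwards [this] with t h
    linarith
  filter_upwards [hev, self_mem_nhdsWithin] with t htN ht x x' hx hx'
  have ht : 0 < t := ht
  refine le_trans ?_ (mul_le_mul_of_nonneg_right hN.le (by positivity))
  refine le_of_tendsto_of_tendsto (tendsto_mid_sq ht x') ((tendsto_mid_sq ht x).const_mul _) ?_
  filter_upwards [eventually_ge_atTop N] with n hn
  have hpow : (3 / 4 : ℝ) ^ N = ∏ j ∈ Finset.range n, if j < N then (3 / 4 : ℝ) else 1 := by
    rw [← Finset.prod_filter, Finset.prod_const]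
    congr 1
    rw [show (Finset.range n).filter (· < N) = Finset.range N by ext; simp; omega]
    simp
  rw [hpow, ← Finset.prod_mul_distrib]
  refine Finset.prod_le_prod (fun j _ => by positivity) fun j _ => ?_
  have hr := Real.exp_pos (-(2 * π * t * (j + 1 / 2)))
  split_ifs with hj
  · have := htN j (Finset.mem_range.2 hj)
    nlinarith
  · nlinarith

/-! ### Concentration of the weight at `sin(πx) = 0` -/

lemma abs_sin_nat_mul_le (n : ℕ) (x : ℝ) : |Real.sin (n * x)| ≤ n * |Real.sin x| := by
  induction n with
  | zero => simp
  | succ n ih =>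
    push_cast
    rw [add_mul, one_mul, Real.sin_add, add_mul, one_mul]
    refine (abs_add_le _ _).trans ?_
    rw [abs_mul, abs_mul]
    have := mul_le_of_le_one_right (abs_nonneg (Real.sin (n * x))) (Real.abs_cos_le_one x)
    have := mul_le_of_le_one_left (abs_nonneg (Real.sin x)) (Real.abs_cos_le_one (n * x))
    linarith

lemma norm_exp_sub_one_le_sin (s : ℕ) (x : ℝ) :
    ‖Complex.exp (-(2 * ↑π * I * s * x)) - 1‖ ≤ 2 * s * |Real.sin (π * x)| := by
  have := Complex.norm_exp_I_mul_ofReal_sub_one (-(2 * π * s * x))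
  rw [show (-(2 * ↑π * I * s * x) : ℂ) = I * ((-(2 * π * s * x) : ℝ) : ℂ) by push_cast; ring, this,
    show -(2 * π * s * x) / 2 = -(s * (π * x)) by ring, Real.sin_neg, norm_mul, norm_neg,
    Real.norm_eq_abs, Real.norm_eq_abs]
  have := abs_sin_nat_mul_le s (π * x)
  simp
  linarith

lemma continuous_mid {t : ℝ} (ht : 0 < t) : Continuous (mid t) := by
  unfold mid zet
  exact (differentiable_qPoch (norm_nome_lt ht)).continuous.comp (by fun_prop)

lemma mid_ne_zero {t : ℝ} (ht : 0 < t) (x : ℝ) : mid t x ≠ 0 := by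
  refine qPoch_ne_zero ?_ (norm_nome_lt ht)
  rw [norm_zet]; simp; positivity

/-- The positive weight `‖(ζ;q)_∞‖^{-2ℓ}` on the symmetric contour. -/
noncomputable def wt (ℓ : ℕ) (t x : ℝ) : ℝ := ((‖mid t x‖ ^ 2) ^ ℓ)⁻¹

lemma wt_pos (ℓ : ℕ) {t : ℝ} (ht : 0 < t) (x : ℝ) : 0 < wt ℓ t x := by
  have := norm_pos_iff.2 (mid_ne_zero ht x)
  unfold wt; positivity

lemma continuous_wt (ℓ : ℕ) {t : ℝ} (ht : 0 < t) : Continuous (wt ℓ t) := by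
  unfold wt
  refine Continuous.inv₀ (by have := continuous_mid ht; fun_prop) fun x => ?_
  have := norm_pos_iff.2 (mid_ne_zero ht x)
  positivity

lemma integral_wt_pos (ℓ : ℕ) {t : ℝ} (ht : 0 < t) : 0 < ∫ x in (0 : ℝ)..1, wt ℓ t x :=
  intervalIntegral.intervalIntegral_pos_of_pos ((continuous_wt ℓ ht).intervalIntegrable _ _)
    (wt_pos ℓ ht) one_pos

lemma eventually_wt_le {ℓ : ℕ} (hℓ : 1 ≤ ℓ) {A κ : ℝ} (hA : 0 < A) (hκ : 0 < κ) :
    ∀ᶠ t in 𝓝[>] (0 : ℝ), ∀ x x' : ℝ, A ≤ Real.sin (π * x) ^ 2 →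
      Real.sin (π * x') ^ 2 ≤ A / 2 → wt ℓ t x ≤ κ * wt ℓ t x' := by
  filter_upwards [eventually_mid_le hA (lt_min hκ one_pos), self_mem_nhdsWithin] with t h ht x x' hx hx'
  have ht : 0 < t := ht
  have h1 := norm_pos_iff.2 (mid_ne_zero ht x)
  have h2 := norm_pos_iff.2 (mid_ne_zero ht x')
  have hm : 0 < min κ 1 := lt_min hκ one_pos
  have h3 := pow_le_pow_left₀ (by positivity) (h x x' hx hx') ℓ
  rw [mul_pow] at h3
  have h4 : min κ 1 ^ ℓ ≤ κ :=
    (pow_le_of_le_one hm.le (min_le_right _ _) (by omega)).trans (min_le_left _ _)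
  have h5 : (‖mid t x'‖ ^ 2) ^ ℓ ≤ κ * (‖mid t x‖ ^ 2) ^ ℓ :=
    h3.trans (mul_le_mul_of_nonneg_right h4 (by positivity))
  unfold wt
  rw [← div_eq_mul_inv, inv_eq_one_div, div_le_div_iff₀ (by positivity) (by positivity)]
  linarith

/-- The `s`-th Fourier coefficient of the weight is asymptotic to its mean as `t → 0⁺`. -/
lemma tendsto_conc {ℓ : ℕ} (hℓ : 1 ≤ ℓ) (s : ℕ) :
    Tendsto (fun t : ℝ => (∫ x in (0 : ℝ)..1, (wt ℓ t x : ℂ) * Complex.exp (-(2 * ↑π * I * s * x))) /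
      ∫ x in (0 : ℝ)..1, (wt ℓ t x : ℂ)) (𝓝[>] 0) (𝓝 1) := by
  rw [Metric.tendsto_nhds]
  intro ε hε
  set A : ℝ := (ε / (8 * (s + 1))) ^ 2 with hAdef
  have hA : 0 < A := by positivity
  obtain ⟨δ, hδ0, hδ1, hδ⟩ : ∃ δ : ℝ, 0 < δ ∧ δ ≤ 1 ∧ ∀ x ∈ Set.Icc 0 δ, Real.sin (π * x) ^ 2 ≤ A / 2 := by
    have hc : Continuous fun x : ℝ => Real.sin (π * x) ^ 2 := by fun_prop
    have := (hc.tendsto 0).eventually_lt_const (u := A / 2) (by simpa using hA)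
    obtain ⟨d, hd, h⟩ := Metric.eventually_nhds_iff.1 this
    refine ⟨min (d / 2) 1, by positivity, min_le_right _ _, fun x hx => (h ?_).le⟩
    rw [Real.dist_eq, sub_zero, abs_of_nonneg hx.1]
    have := hx.2.trans (min_le_left _ _)
    linarith
  set κ : ℝ := ε * δ / (8 * (s + 1)) with hκdef
  have hκ : 0 < κ := by positivity
  filter_upwards [eventually_wt_le hℓ hA hκ, self_mem_nhdsWithin] with t h ht
  have ht : 0 < t := ht
  have hcw := continuous_wt ℓ ht
  have hW := integral_wt_pos ℓ ht
  set W := ∫ x in (0 : ℝ)..1, wt ℓ t x with hWdef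
  have hWc : (∫ x in (0 : ℝ)..1, (wt ℓ t x : ℂ)) = (W : ℂ) := intervalIntegral.integral_ofReal
  have hWne : (W : ℂ) ≠ 0 := by exact_mod_cast ne_of_gt hW
  -- Where `sin²(πx) < A` the phase is within `ε/4` of `1`; elsewhere the weight itself is at most a
  -- small multiple of its mean, by comparison with its average over `[0, δ]`.
  have hpt : ∀ x : ℝ, ‖(wt ℓ t x : ℂ) * Complex.exp (-(2 * ↑π * I * s * x)) - (wt ℓ t x : ℂ)‖ ≤
      ε / 4 * wt ℓ t x + ε / 4 * W := by
    intro x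
    have hw := wt_pos ℓ ht x
    rw [← mul_sub_one, norm_mul, Complex.norm_real, Real.norm_of_nonneg hw.le]
    have h1 := norm_exp_sub_one_le_sin s x
    by_cases hx : A ≤ Real.sin (π * x) ^ 2
    · have hmean : δ * wt ℓ t x ≤ κ * W := by
        have h2 : ∫ x' in (0 : ℝ)..δ, wt ℓ t x ≤ ∫ x' in (0 : ℝ)..δ, κ * wt ℓ t x' :=
          intervalIntegral.integral_mono_on hδ0.le (by simp)
            ((continuous_const.mul hcw).intervalIntegrable _ _) fun x' hx' => h x x' hx (hδ x' hx')
        have h3 : ∫ x' in (0 : ℝ)..δ, wt ℓ t x' ≤ W :=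
          intervalIntegral.integral_mono_interval le_rfl hδ0.le hδ1
            (.of_forall fun x => (wt_pos ℓ ht x).le) (hcw.intervalIntegrable _ _)
        rw [intervalIntegral.integral_const, intervalIntegral.integral_const_mul, sub_zero,
          smul_eq_mul] at h2
        exact h2.trans (mul_le_mul_of_nonneg_left h3 hκ.le)
      have h4 : wt ℓ t x ≤ ε / (8 * (s + 1)) * W := by
        have : δ * wt ℓ t x ≤ δ * (ε / (8 * (s + 1)) * W) := by
          refine hmean.trans_eq ?_
          rw [hκdef]; ring
        exact le_of_mul_le_mul_left this hδ0
      have h5 : ‖Complex.exp (-(2 * ↑π * I * s * x)) - 1‖ ≤ 2 * (s + 1) := by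
        refine h1.trans ?_
        have := mul_le_of_le_one_right (by positivity : (0:ℝ) ≤ 2 * s) (Real.abs_sin_le_one (π * x))
        linarith
      calc _ ≤ (ε / (8 * (s + 1)) * W) * (2 * (s + 1)) := by gcongr
        _ = ε / 4 * W := by field_simp; ring
        _ ≤ _ := by linarith [mul_pos hε hw]
    · have h6 : |Real.sin (π * x)| ≤ ε / (8 * (s + 1)) :=
        (sq_lt_sq₀ (abs_nonneg _) (by positivity)).1 (by rw [sq_abs]; exact not_le.1 hx) |>.le
      have h7 : ‖Complex.exp (-(2 * ↑π * I * s * x)) - 1‖ ≤ ε / 4 := by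
        calc _ ≤ 2 * s * |Real.sin (π * x)| := h1
          _ ≤ 2 * (s + 1) * (ε / (8 * (s + 1))) := by gcongr; linarith
          _ = ε / 4 := by field_simp; ring
      have := mul_le_mul_of_nonneg_left h7 hw.le
      linarith [mul_pos hε hW]
  rw [hWc, dist_eq_norm, div_sub_one hWne, norm_div, Complex.norm_real, Real.norm_of_nonneg hW.le,
    div_lt_iff₀ hW, ← hWc, ← intervalIntegral.integral_sub]
  · calc _ ≤ ∫ x in (0 : ℝ)..1, (ε / 4 * wt ℓ t x + ε / 4 * W) :=
          intervalIntegral.norm_integral_le_of_norm_le zero_le_one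
            (.of_forall fun x _ => hpt x) (by apply Continuous.intervalIntegrable; fun_prop)
      _ = ε / 2 * W := by
          rw [intervalIntegral.integral_add (by apply Continuous.intervalIntegrable; fun_prop)
            (by simp), intervalIntegral.integral_const_mul]
          simp [← hWdef]; ring
      _ < ε * W := by nlinarith
  · apply Continuous.intervalIntegrable; fun_prop
  · apply Continuous.intervalIntegrable; fun_prop

/-! ### Moving the contour to the symmetric height -/

/-- The integrand of `Fls` at `q = e^{-2πt}`, as a function of the complex variable `z = x + iy`. -/
noncomputable def integrand (ℓ s : ℕ) (t : ℝ) (z : ℂ) : ℂ :=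
  qPoch (Complex.exp (-((2 * π * t : ℝ) : ℂ))) (Complex.exp (-((2 * π * t : ℝ) : ℂ))) /
    (qPoch (Complex.exp (2 * ↑π * I * z)) (Complex.exp (-((2 * π * t : ℝ) : ℂ))) ^ ℓ *
      qPoch (Complex.exp (-(2 * ↑π * I * z)) * Complex.exp (-((2 * π * t : ℝ) : ℂ)))
        (Complex.exp (-((2 * π * t : ℝ) : ℂ))) ^ ℓ) *
    Complex.exp (-(2 * ↑π * I * (s : ℂ) * z))

lemma integrand_add_one (ℓ s : ℕ) (t : ℝ) (z : ℂ) :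
    integrand ℓ s t (z + 1) = integrand ℓ s t z := by
  have h1 : Complex.exp (2 * ↑π * I * (z + 1)) = Complex.exp (2 * ↑π * I * z) := by
    rw [mul_add, mul_one, Complex.exp_periodic]
  have h2 : Complex.exp (-(2 * ↑π * I * (z + 1))) = Complex.exp (-(2 * ↑π * I * z)) := by
    rw [Complex.exp_neg, h1, ← Complex.exp_neg]
  have h3 : Complex.exp (-(2 * ↑π * I * (s : ℂ) * (z + 1))) =
      Complex.exp (-(2 * ↑π * I * (s : ℂ) * z)) := by
    rw [show -(2 * ↑π * I * (s : ℂ) * (z + 1)) = s * -(2 * ↑π * I * (z + 1)) by ring,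
      show -(2 * ↑π * I * (s : ℂ) * z) = s * -(2 * ↑π * I * z) by ring,
      Complex.exp_nat_mul, Complex.exp_nat_mul, h2]
  rw [integrand, integrand, h1, h2, h3]

lemma differentiableAt_integrand (ℓ s : ℕ) {t : ℝ} (ht : 0 < t) {z : ℂ} (h0 : 0 < z.im)
    (h1 : z.im < t) : DifferentiableAt ℂ (integrand ℓ s t) z := by
  have hq := norm_nome_lt ht
  have hd := differentiable_qPoch hq
  have ha : qPoch (Complex.exp (2 * ↑π * I * z)) (Complex.exp (-((2 * π * t : ℝ) : ℂ))) ≠ 0 := by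
    refine qPoch_ne_zero ?_ hq
    rw [Complex.norm_exp]; simp; positivity
  have hb : qPoch (Complex.exp (-(2 * ↑π * I * z)) * Complex.exp (-((2 * π * t : ℝ) : ℂ)))
      (Complex.exp (-((2 * π * t : ℝ) : ℂ))) ≠ 0 := by
    refine qPoch_ne_zero ?_ hq
    rw [← Complex.exp_add, Complex.norm_exp]; simp; gcongr
  unfold integrand
  generalize Complex.exp (-((2 * π * t : ℝ) : ℂ)) = q at *
  have hda : DifferentiableAt ℂ (fun z => qPoch (Complex.exp (2 * ↑π * I * z)) q) z :=
    DifferentiableAt.fun_comp' z (g := fun a => qPoch a q) (hd _) (by fun_prop)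
  have hdb : DifferentiableAt ℂ (fun z => qPoch (Complex.exp (-(2 * ↑π * I * z)) * q) q) z :=
    DifferentiableAt.fun_comp' z (g := fun a => qPoch a q) (hd _) (by fun_prop)
  have hdc : DifferentiableAt ℂ (fun z => Complex.exp (-(2 * ↑π * I * (s : ℂ) * z))) z := by
    fun_prop
  exact ((differentiableAt_const _).fun_div ((hda.fun_pow ℓ).fun_mul (hdb.fun_pow ℓ))
    (mul_ne_zero (pow_ne_zero _ ha) (pow_ne_zero _ hb))).fun_mul hdc

/-- The two vertical sides of the rectangle between the heights `y` and `y'` cancel by periodicity. -/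
lemma integral_integrand_eq (ℓ s : ℕ) {t y y' : ℝ} (ht : 0 < t) (hy : 0 < y ∧ y < t)
    (hy' : 0 < y' ∧ y' < t) :
    ∫ x in (0 : ℝ)..1, integrand ℓ s t (x + y * I) =
      ∫ x in (0 : ℝ)..1, integrand ℓ s t (x + y' * I) := by
  have h := Complex.integral_boundary_rect_eq_zero_of_differentiableOn (integrand ℓ s t)
    (y * I) (1 + y' * I) (fun z hz => by
      have him := (Complex.mem_reProdIm.1 hz).2
      simp only [Complex.add_im, Complex.mul_im, Complex.ofReal_re, Complex.ofReal_im, Complex.I_re,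
        Complex.I_im, Complex.one_im, mul_one, mul_zero, add_zero, zero_add] at him
      have := Set.ordConnected_Ioo.uIcc_subset (Set.mem_Ioo.2 hy) (Set.mem_Ioo.2 hy') him
      exact (differentiableAt_integrand ℓ s ht this.1 this.2).differentiableWithinAt)
  have hper : ∀ v : ℝ, integrand ℓ s t (1 + v * I) = integrand ℓ s t (v * I) := fun v => by
    rw [add_comm, integrand_add_one]
  simp [hper] at h
  exact sub_eq_zero.1 h

lemma qPoch_conj (a : ℂ) {q : ℂ} (hq : ‖q‖ < 1) (hr : starRingEnd ℂ q = q) :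
    qPoch (starRingEnd ℂ a) q = starRingEnd ℂ (qPoch a q) := by
  rw [qPoch, qPoch, (multipliable_qPoch a hq).map_tprod (starRingEnd ℂ) Complex.continuous_conj]
  simp [hr]

lemma integrand_mid (ℓ s : ℕ) {t : ℝ} (ht : 0 < t) (x : ℝ) :
    integrand ℓ s t (x + (t / 2 : ℝ) * I) =
      qPoch (Complex.exp (-((2 * π * t : ℝ) : ℂ))) (Complex.exp (-((2 * π * t : ℝ) : ℂ))) *
        Complex.exp (π * t * s) * ((wt ℓ t x : ℂ) * Complex.exp (-(2 * ↑π * I * s * x))) := by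
  have hconj : Complex.exp (-(2 * ↑π * I * (x + (t / 2 : ℝ) * I))) *
      Complex.exp (-((2 * π * t : ℝ) : ℂ)) = starRingEnd ℂ (zet (x + (t / 2 : ℝ) * I)) := by
    rw [zet, ← Complex.exp_conj, ← Complex.exp_add]
    congr 1
    simp [Complex.conj_ofNat]
    linear_combination (-2 * π * t) * I_sq
  have hexp : Complex.exp (-(2 * ↑π * I * (s : ℂ) * (x + (t / 2 : ℝ) * I))) =
      Complex.exp (π * t * s) * Complex.exp (-(2 * ↑π * I * s * x)) := by
    rw [← Complex.exp_add]
    congr 1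
    push_cast
    linear_combination (-π * t * s) * I_sq
  have hw : (wt ℓ t x : ℂ) = (mid t x ^ ℓ * (starRingEnd ℂ (mid t x)) ^ ℓ)⁻¹ := by
    rw [← mul_pow, Complex.mul_conj', wt]
    push_cast
    rfl
  rw [integrand, hconj, hexp, qPoch_conj _ (norm_nome_lt ht) (by
    rw [← Complex.exp_conj, map_neg, Complex.conj_ofReal]), hw]
  simp only [mid, zet]
  ring

lemma chF_eq (ℓ s : ℕ) {t y : ℝ} (ht : 0 < t) (hy : 0 < y ∧ y < t) :
    chF ℓ s (2 * π * t) y =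
      Complex.exp (-((2 * π * t : ℝ) : ℂ) * ((hConf ℓ s : ℝ) + ((ℓ : ℝ) + 1) / 24)) *
        Complex.exp (π * t * s) *
        qPoch (Complex.exp (-((2 * π * t : ℝ) : ℂ))) (Complex.exp (-((2 * π * t : ℝ) : ℂ))) *
        ∫ x in (0 : ℝ)..1, (wt ℓ t x : ℂ) * Complex.exp (-(2 * ↑π * I * s * x)) := by
  have hq := norm_nome_lt ht
  have hne := pow_ne_zero (ℓ ^ 2 - 1) (qPoch_ne_zero hq hq)
  have hI : Fls ℓ s (Complex.exp (-((2 * π * t : ℝ) : ℂ))) y =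
      qPoch (Complex.exp (-((2 * π * t : ℝ) : ℂ))) (Complex.exp (-((2 * π * t : ℝ) : ℂ))) ^
        (ℓ ^ 2 - 1) * ∫ x in (0 : ℝ)..1, integrand ℓ s t (x + y * I) := rfl
  rw [chF, hI, integral_integrand_eq ℓ s ht hy (y' := t / 2) ⟨by linarith, by linarith⟩]
  simp_rw [integrand_mid ℓ s ht]
  rw [intervalIntegral.integral_const_mul]
  field_simp

/-- The quantum dimension of `L_{sl_ℓ}(-(s+1)Λ₀ + sΛ₁)` is `1`:
`lim_{t→0⁺} ch_s(it)/ch_0(it) = 1`, where for `τ = it` one has `q = e^{-2πt}`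
(so the character at `τ = it` is `chF ℓ s (2πt)`, with admissible contour heights). -/
theorem stmt2 (ℓ s : ℕ) (hℓ : 3 ≤ ℓ) (y y₀ : ℝ → ℝ)
    (hy : ∀ t : ℝ, 0 < t → 0 < y t ∧ y t < t)
    (hy₀ : ∀ t : ℝ, 0 < t → 0 < y₀ t ∧ y₀ t < t) :
    Tendsto (fun t : ℝ => chF ℓ s (2 * π * t) (y t) / chF ℓ 0 (2 * π * t) (y₀ t))
      (𝓝[>] (0 : ℝ)) (𝓝 (1 : ℂ)) := by
  have hpre : Tendsto (fun t : ℝ => Complex.exp (-((2 * π * t : ℝ) : ℂ) * (hConf ℓ s : ℝ) +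
      π * t * s)) (𝓝[>] 0) (𝓝 1) := by
    have hc : Continuous fun t : ℝ => Complex.exp (-((2 * π * t : ℝ) : ℂ) * (hConf ℓ s : ℝ) +
      π * t * s) := by fun_prop
    simpa using (hc.tendsto 0).mono_left nhdsWithin_le_nhds
  have h := hpre.mul (tendsto_conc (ℓ := ℓ) (by omega) s)
  rw [one_mul] at h
  refine h.congr' ?_
  filter_upwards [self_mem_nhdsWithin] with t ht
  have ht : 0 < t := ht
  have hq := norm_nome_lt ht
  have hne := qPoch_ne_zero hq hq
  have hW : (∫ x in (0 : ℝ)..1, (wt ℓ t x : ℂ)) ≠ 0 := by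
    rw [intervalIntegral.integral_ofReal]
    exact_mod_cast (integral_wt_pos ℓ ht).ne'
  have h0 : hConf ℓ 0 = 0 := by simp [hConf]
  rw [chF_eq ℓ s ht (hy t ht), chF_eq ℓ 0 ht (hy₀ t ht), h0, mul_add, mul_add, Complex.exp_add,
    Complex.exp_add, Complex.exp_add]
  generalize qPoch (Complex.exp (-((2 * π * t : ℝ) : ℂ)))
    (Complex.exp (-((2 * π * t : ℝ) : ℂ))) = Q at *
  simp
  field_simp
end

section
/- Let ℓ be an even integer with ℓ ≥ 2. Then the coefficient of w^{ℓ−2} in the Taylor expansion at w = 0 of the holomorphic function w ↦ (w/(e^w − 1))^ℓ e^{ℓw/2} equals (−1)^{ℓ/2+1} ((ℓ/2 − 1)!)² / (ℓ−1)!. Equivalently, Res_{z=0} [ z e^{ℓz/2}/(e^z − 1)^ℓ ] = (−1)^{ℓ/2+1} ((ℓ/2 − 1)!)²/(ℓ−1)!, and B_{ℓ−2}^{(ℓ)}(ℓ/2) = (−1)^{ℓ/2+1} (ℓ−2)! ((ℓ/2 − 1)!)²/(ℓ−1)!. -/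
/-!
Write `G w = (w/2) / sinh (w/2)`, so that `(w/(e^w-1))^ℓ e^{ℓw/2} = G^ℓ` (`bernGen_eq_pow`), and
let `θ = w d/dw`. The identity `G · 2 sinh (w/2) = w` gives `θ G = G (1 - G cosh (w/2))`
(`bernGen_theta`), and from it the differential equation

  `(θ - ℓ - 1) (θ - ℓ) G^ℓ = ℓ (ℓ + 1) G^{ℓ+2} + (ℓ²/4) w² G^ℓ`

near `0` (`bernGen_ode`). On `n`-th Taylor coefficients `θ - c` acts as multiplication by `n - c`
(`iteratedDeriv_euler_zero`), so the left-hand side has no `w^ℓ` term. Comparing coefficients of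
`w^ℓ` yields `[w^ℓ] G^{ℓ+2} = - ℓ/(4(ℓ+1)) · [w^{ℓ-2}] G^ℓ` (`bernGen_coeff_rec`, stated there for
derivatives). Starting from `[w^0] G^2 = 1`, induction on `ℓ/2` gives the closed form.
Equivalently, `s = 1/(2 sinh (w/2))` satisfies `(s^ℓ)'' = (ℓ²/4) s^ℓ + ℓ(ℓ+1) s^{ℓ+2}`, and a second
derivative of a Laurent series has no `w^{-2}` term; multiplying by `w^{ℓ+2}` avoids the pole.
-/

open Complex Real Filter Topology

/-- The generating function `w ↦ (w/(e^w-1))^r e^{xw}` of the Bernoulli polynomials of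
order `r`, with the removable singularity at `w = 0` filled in by its value `1`. -/
noncomputable def bernGen (r : ℕ) (x : ℂ) (w : ℂ) : ℂ :=
  if w = 0 then 1 else (w / (Complex.exp w - 1)) ^ r * Complex.exp (x * w)

/-- The Bernoulli polynomial of order `r`, `B_n^{(r)}(x)`: `n!` times the `n`-th Taylor
coefficient of `w ↦ (w/(e^w-1))^r e^{xw}` at `w = 0`. -/
noncomputable def genBernoulli (n r : ℕ) (x : ℂ) : ℂ :=
  (Nat.factorial n : ℂ) * (iteratedDeriv n (bernGen r x) 0 / (Nat.factorial n : ℂ))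

/-- Multiplication by `w` shifts Taylor coefficients at `0`. For `n = 0` both sides vanish, so the
truncated `n - 1` is harmless. -/
theorem iteratedDeriv_id_mul_zero (g : ℂ → ℂ) (hg : AnalyticAt ℂ g 0) (n : ℕ) :
    iteratedDeriv n (fun w => w * g w) 0 = n * iteratedDeriv (n - 1) g 0 := by
  rw [iteratedDeriv_fun_mul contDiffAt_fun_id hg.contDiffAt]
  simp only [iteratedDeriv_fun_id_zero]
  cases n with
  | zero => simp
  | succ n => simp

/-- The operator `θ - c`, with `θ = w d/dw`, multiplies the `n`-th derivative at `0` by `n - c`. -/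
theorem iteratedDeriv_euler_zero (F : ℂ → ℂ) (hF : AnalyticAt ℂ F 0) (c : ℂ) (n : ℕ) :
    iteratedDeriv n (fun w => w * deriv F w - c * F w) 0 = (n - c) * iteratedDeriv n F 0 := by
  have h1 : AnalyticAt ℂ (fun w => w * deriv F w) 0 := analyticAt_id.mul hF.deriv
  have h2 : AnalyticAt ℂ (fun w => c * F w) 0 := analyticAt_const.mul hF
  rw [iteratedDeriv_fun_sub h1.contDiffAt h2.contDiffAt, iteratedDeriv_id_mul_zero _ hF.deriv,
    iteratedDeriv_const_mul_field]
  cases n with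
  | zero => simp
  | succ n =>
    rw [Nat.add_sub_cancel, ← iteratedDeriv_succ']
    ring

/-- A description of `bernGen` without case distinction: `dslope` fills in the removable singularity
of `(e^w - 1)/w`. It also holds at nonzero `w` with `e^w = 1`, where both sides are `0⁻¹ ^ r`
times an exponential. -/
theorem bernGen_eq_dslope (r : ℕ) (x w : ℂ) :
    bernGen r x w = (dslope (fun z => Complex.exp z - 1) 0 w)⁻¹ ^ r * Complex.exp (x * w) := by
  by_cases hw : w = 0
  · subst hw
    simp [bernGen, dslope_same]
  · simp [bernGen, hw, dslope_of_ne, slope_def_field]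

theorem analyticAt_bernGen (r : ℕ) (x : ℂ) : AnalyticAt ℂ (bernGen r x) 0 := by
  have hD : AnalyticAt ℂ (dslope (fun z => Complex.exp z - 1) 0) 0 := by
    have : AnalyticAt ℂ (fun z : ℂ => Complex.exp z - 1) 0 := by fun_prop
    obtain ⟨p, hp⟩ := this
    exact hp.has_fpower_series_dslope_fslope.analyticAt
  have h0 : dslope (fun z => Complex.exp z - 1) 0 0 ≠ 0 := by simp [dslope_same]
  rw [funext (bernGen_eq_dslope r x)]
  exact ((hD.inv h0).pow r).mul (by fun_prop)

/-- With `x = r/2` the generating function is the `r`-th power of `G w = (w/2)/sinh (w/2)`, which is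
`bernGen 1 (1 / 2)`. -/
theorem bernGen_eq_pow (r : ℕ) (w : ℂ) : bernGen r ((r : ℂ) / 2) w = bernGen 1 (1 / 2) w ^ r := by
  rw [bernGen_eq_dslope, bernGen_eq_dslope, mul_pow, ← Complex.exp_nat_mul, pow_one]
  congr 2
  ring

theorem bernGen_mul_sinh :
    ∀ᶠ w in 𝓝 (0 : ℂ), bernGen 1 (1 / 2) w * (2 * Complex.sinh (w / 2)) = w := by
  have h : ∀ᶠ w in 𝓝 (0 : ℂ), dslope (fun z => Complex.exp z - 1) 0 w ≠ 0 := by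
    obtain ⟨p, hp⟩ : AnalyticAt ℂ (fun z : ℂ => Complex.exp z - 1) 0 := by fun_prop
    exact hp.has_fpower_series_dslope_fslope.analyticAt.continuousAt.eventually_ne
      (by simp [dslope_same])
  filter_upwards [h] with w hw
  have hs : w * dslope (fun z => Complex.exp z - 1) 0 w = Complex.exp w - 1 := by
    simpa using sub_smul_dslope (fun z : ℂ => Complex.exp z - 1) 0 w
  have he : Complex.exp (1 / 2 * w) * (2 * Complex.sinh (w / 2)) = Complex.exp w - 1 := by
    rw [Complex.two_sinh, mul_sub, ← Complex.exp_add, ← Complex.exp_add]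
    ring_nf
    simp [neg_add_eq_sub]
  rw [bernGen_eq_dslope, mul_assoc, he, ← hs]
  field_simp

/-- Obtained by differentiating `G · 2 sinh (w/2) = w` and multiplying by `G`, so that no division by
`w` is needed and the identity includes `w = 0`. -/
theorem bernGen_theta :
    ∀ᶠ w in 𝓝 (0 : ℂ), w * deriv (bernGen 1 (1 / 2)) w =
      bernGen 1 (1 / 2) w * (1 - bernGen 1 (1 / 2) w * Complex.cosh (w / 2)) := by
  filter_upwards [bernGen_mul_sinh, bernGen_mul_sinh.eventually_nhds,
    (analyticAt_bernGen 1 (1 / 2)).eventually_analyticAt] with w hw hw' ha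
  set G := bernGen 1 (1 / 2)
  have hS : HasDerivAt (fun w : ℂ => 2 * Complex.sinh (w / 2)) (Complex.cosh (w / 2)) w := by
    convert! (((hasDerivAt_id w).div_const 2).csinh).const_mul 2 using 1
    simp
    ring
  have h1 := (ha.differentiableAt.hasDerivAt.mul hS).unique
    ((hasDerivAt_id w).congr_of_eventuallyEq hw')
  linear_combination G w * h1 - deriv G w * hw

/-- The equation `(θ - ℓ - 1) (θ - ℓ) G^ℓ = ℓ (ℓ + 1) G^{ℓ+2} + (ℓ²/4) w² G^ℓ`, where
`G = bernGen 1 (1 / 2)` and `θ = w d/dw`. -/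
theorem bernGen_ode (ℓ : ℕ) :
    ∀ᶠ w in 𝓝 (0 : ℂ),
      w * deriv (fun z => z * deriv (fun u => bernGen 1 (1 / 2) u ^ ℓ) z
          - ℓ * bernGen 1 (1 / 2) z ^ ℓ) w
        - (ℓ + 1) * (w * deriv (fun u => bernGen 1 (1 / 2) u ^ ℓ) w
          - ℓ * bernGen 1 (1 / 2) w ^ ℓ) =
      (ℓ : ℂ) * (ℓ + 1) * bernGen 1 (1 / 2) w ^ (ℓ + 2)
        + (ℓ : ℂ) ^ 2 / 4 * (w * (w * bernGen 1 (1 / 2) w ^ ℓ)) := by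
  have hθ : ∀ᶠ w in 𝓝 (0 : ℂ), w * deriv (fun u => bernGen 1 (1 / 2) u ^ ℓ) w =
      ℓ * bernGen 1 (1 / 2) w ^ ℓ * (1 - bernGen 1 (1 / 2) w * Complex.cosh (w / 2)) := by
    filter_upwards [bernGen_theta,
      (analyticAt_bernGen 1 (1 / 2)).eventually_analyticAt] with w h ha
    rw [deriv_fun_pow ha.differentiableAt]
    cases ℓ with
    | zero => simp
    | succ n =>
      simp only [Nat.add_sub_cancel]
      linear_combination ((n + 1 : ℕ) : ℂ) * bernGen 1 (1 / 2) w ^ n * h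
  have hL : ∀ᶠ w in 𝓝 (0 : ℂ), w * deriv (fun u => bernGen 1 (1 / 2) u ^ ℓ) w
      - ℓ * bernGen 1 (1 / 2) w ^ ℓ =
      -ℓ * bernGen 1 (1 / 2) w ^ ℓ * (bernGen 1 (1 / 2) w * Complex.cosh (w / 2)) := by
    filter_upwards [hθ] with w h
    linear_combination h
  filter_upwards [hθ, hL, hL.eventually_nhds, bernGen_theta, bernGen_mul_sinh,
    (analyticAt_bernGen 1 (1 / 2)).eventually_analyticAt] with w h1 h2 h3 h4 h5 ha
  rw [EventuallyEq.deriv_eq h3, h2]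
  set G := bernGen 1 (1 / 2)
  have hC : HasDerivAt (fun w : ℂ => Complex.cosh (w / 2)) (Complex.sinh (w / 2) / 2) w := by
    convert! (((hasDerivAt_id w).div_const 2).ccosh) using 1
    simp
    ring
  have hG := ha.differentiableAt.hasDerivAt
  have hP : HasDerivAt (fun u => G u ^ ℓ) (deriv (fun u => G u ^ ℓ) w) w :=
    (ha.differentiableAt.pow ℓ).hasDerivAt
  have hD := ((hP.const_mul (-ℓ : ℂ)).mul (hG.mul hC)).deriv
  have hsq := Complex.cosh_sq (w / 2)
  have h6 : G w ^ 2 * Complex.sinh (w / 2) ^ 2 = w ^ 2 / 4 := by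
    linear_combination (1 / 4 : ℂ) * (G w * (2 * Complex.sinh (w / 2)) + w) * h5
  simp only [Pi.mul_def] at hD
  rw [hD]
  -- `h1` and `h4` eliminate the derivatives; `cosh² = sinh² + 1` and `G · 2 sinh (w/2) = w`
  -- finish.
  linear_combination (-ℓ * (G w * Complex.cosh (w / 2))) * h1
    + (-ℓ * G w ^ ℓ * Complex.cosh (w / 2)) * h4 + ℓ * (ℓ + 1) * G w ^ (ℓ + 2) * hsq
    + ℓ * (ℓ + 1) * G w ^ ℓ * h6 - ℓ * G w ^ ℓ * w / 4 * h5

/-- Recursion in steps of two, from comparing `ℓ`-th derivatives at `0` in `bernGen_ode`. -/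
theorem bernGen_coeff_rec (ℓ : ℕ) (hℓ : 2 ≤ ℓ) :
    iteratedDeriv ℓ (bernGen (ℓ + 2) (((ℓ + 2 : ℕ) : ℂ) / 2)) 0 =
      -((ℓ : ℂ) ^ 2 * (ℓ - 1) / (4 * (ℓ + 1))) *
        iteratedDeriv (ℓ - 2) (bernGen ℓ ((ℓ : ℂ) / 2)) 0 := by
  rw [funext (bernGen_eq_pow ℓ), funext (bernGen_eq_pow (ℓ + 2))]
  have hG := analyticAt_bernGen 1 (1 / 2)
  have hF : ∀ m, AnalyticAt ℂ (fun w => bernGen 1 (1 / 2) w ^ m) 0 := fun m => hG.pow m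
  have hE : AnalyticAt ℂ (fun z => z * deriv (fun u => bernGen 1 (1 / 2) u ^ ℓ) z
          - ℓ * bernGen 1 (1 / 2) z ^ ℓ) 0 :=
    (analyticAt_id.mul (hF ℓ).deriv).sub (analyticAt_const.mul (hF ℓ))
  have hw : AnalyticAt ℂ (fun w => w * bernGen 1 (1 / 2) w ^ ℓ) 0 := analyticAt_id.mul (hF ℓ)
  have hww : AnalyticAt ℂ (fun w => w * (w * bernGen 1 (1 / 2) w ^ ℓ)) 0 := analyticAt_id.mul hw
  have h1 : AnalyticAt ℂ
      (fun w => (ℓ : ℂ) * (ℓ + 1) * bernGen 1 (1 / 2) w ^ (ℓ + 2)) 0 := analyticAt_const.mul (hF _)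
  have h2 : AnalyticAt ℂ
      (fun w => (ℓ : ℂ) ^ 2 / 4 * (w * (w * bernGen 1 (1 / 2) w ^ ℓ))) 0 := analyticAt_const.mul hww
  -- The outer factor `θ - (ℓ + 1)` acts as `-1`, the inner one `θ - ℓ` as `0`.
  have key := EventuallyEq.iteratedDeriv_eq ℓ (bernGen_ode ℓ)
  rw [iteratedDeriv_euler_zero _ hE, iteratedDeriv_euler_zero _ (hF ℓ), sub_self, zero_mul, mul_zero,
    iteratedDeriv_fun_add h1.contDiffAt h2.contDiffAt,
    iteratedDeriv_const_mul_field, iteratedDeriv_const_mul_field,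
    iteratedDeriv_id_mul_zero _ hw, iteratedDeriv_id_mul_zero _ (hF ℓ),
    Nat.sub_sub, Nat.cast_sub (by omega)] at key
  have h0 : (ℓ : ℂ) ≠ 0 := by exact_mod_cast (by omega : ℓ ≠ 0)
  have h1 : (ℓ : ℂ) + 1 ≠ 0 := by exact_mod_cast (by omega : ℓ + 1 ≠ 0)
  field_simp
  apply mul_left_cancel₀ h0
  push_cast at key
  linear_combination -4 * key

/-- The closed form with `ℓ = 2 * m + 2`, free of truncated subtraction and division. -/
theorem bernGen_coeff (m : ℕ) :
    iteratedDeriv (2 * m) (bernGen (2 * m + 2) (((2 * m + 2 : ℕ) : ℂ) / 2)) 0 /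
        (Nat.factorial (2 * m) : ℂ) =
      (-1 : ℂ) ^ m * (Nat.factorial m : ℂ) ^ 2 / (Nat.factorial (2 * m + 1) : ℂ) := by
  induction m with
  | zero => simp [bernGen]
  | succ m ih =>
    have hr := bernGen_coeff_rec (2 * m + 2) (by omega)
    rw [Nat.add_sub_cancel] at hr
    rw [show 2 * (m + 1) = 2 * m + 2 by ring, hr]
    have hf : (Nat.factorial (2 * m) : ℂ) ≠ 0 := by exact_mod_cast Nat.factorial_ne_zero _
    have h1 : (2 * m + 1 : ℂ) ≠ 0 := by exact_mod_cast (by omega : 2 * m + 1 ≠ 0)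
    have h2 : (m + 1 : ℂ) ≠ 0 := by exact_mod_cast (by omega : m + 1 ≠ 0)
    have h3 : (2 * m + 3 : ℂ) ≠ 0 := by exact_mod_cast (by omega : 2 * m + 3 ≠ 0)
    rw [div_eq_iff hf] at ih
    rw [ih]
    simp only [Nat.factorial_succ, pow_succ]
    push_cast
    have h4 : (2 * m + 1 + 1 + 1 : ℂ) ≠ 0 := by convert h3 using 1; ring
    have h5 : (2 * m + 1 + 1 : ℂ) ≠ 0 := by convert mul_ne_zero two_ne_zero h2 using 1; ring
    have h6 : (2 * m + 2 + 1 : ℂ) ≠ 0 := by convert h3 using 1; ring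
    field_simp
    ring

/-- For even `ℓ ≥ 2`, the coefficient of `w^{ℓ-2}` in the Taylor expansion at `w = 0` of
`(w/(e^w-1))^ℓ e^{ℓw/2}` equals `(-1)^{ℓ/2+1}((ℓ/2-1)!)²/(ℓ-1)!`; equivalently,
`B_{ℓ-2}^{(ℓ)}(ℓ/2) = (-1)^{ℓ/2+1}(ℓ-2)!((ℓ/2-1)!)²/(ℓ-1)!` (from the second proof of
Proposition A.1 of the paper). -/
theorem stmt18 (ℓ : ℕ) (heven : Even ℓ) (hℓ : 2 ≤ ℓ) :
    iteratedDeriv (ℓ - 2) (bernGen ℓ ((ℓ : ℂ) / 2)) 0 / (Nat.factorial (ℓ - 2) : ℂ) =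
      (-1 : ℂ) ^ (ℓ / 2 + 1) * (Nat.factorial (ℓ / 2 - 1) : ℂ) ^ 2 /
        (Nat.factorial (ℓ - 1) : ℂ) ∧
    genBernoulli (ℓ - 2) ℓ ((ℓ : ℂ) / 2) =
      (-1 : ℂ) ^ (ℓ / 2 + 1) * (Nat.factorial (ℓ - 2) : ℂ) *
        (Nat.factorial (ℓ / 2 - 1) : ℂ) ^ 2 / (Nat.factorial (ℓ - 1) : ℂ) := by
  obtain ⟨m, rfl⟩ : ∃ m, ℓ = 2 * m + 2 := by
    obtain ⟨k, rfl⟩ := heven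
    exact ⟨k - 1, by omega⟩
  have h := bernGen_coeff m
  rw [genBernoulli, Nat.add_sub_cancel, show (2 * m + 2) / 2 = m + 1 by omega, Nat.add_sub_cancel,
    show 2 * m + 2 - 1 = 2 * m + 1 by omega, h, pow_add (-1 : ℂ) (m + 1) 1, pow_succ]
  constructor <;> ring
end
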